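/- arXiv:1101.5710 — 9 statements merged into one kernel-verified Lean document; each statement's English description precedes it below -/
import Mathlib

section
/- Let V be a finite-dimensional vector space over a field K and let f : V → V be a linear endomorphism that is not bijective. Then there exist a positive integer n and idempotent linear endomorphisms e₁, …, eₙ of V, each of rank equal to the rank of f, such that f = eₙ ∘ ⋯ ∘ e₁. -/
/-!
Split `f` as `f|_U ∘ e₀`, where `U` is a complement of `ker f` and `e₀` is the projection onto `U`
along `ker f`, an idempotent of rank `r = rank f = dim U`. It remains to move the inclusion
`U → V` to the injection `f|_U : U → V` by composing on the left with idempotents of rank `r`,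
and since `f` is singular, `dim U < dim V`. In this situation any injection `g : U → V` can be
moved to any other injection `h`:

* If `d ∉ range g`, then `g + φ ⊗ d` is `e ∘ g`, where `e` is a projection onto the range of
  `g + φ ⊗ d` along a complement containing `d` (`Reach.of_notMem`).
* If `d ∈ range g` but `g + φ ⊗ d` is still injective, pass through `g + φ ⊗ x` for some
  `x ∉ range g` (`Reach.of_injective`).
* If `g ≠ h`, pick `u` with `g u ≠ h u`. A suitable functional `φ` vanishing on `ker (g - h)` with
  `φ u = 1` makes `g + φ ⊗ (h u - g u)` an injection that agrees with `h` on a strictly larger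
  subspace, and induction on the dimension of `ker (g - h)` finishes the proof (`Reach.all`).
-/

section Reach

variable {K U V : Type*} [Field K] [AddCommGroup U] [Module K U] [AddCommGroup V] [Module K V]

/-- `h` is obtained from `g : U → V` by composing on the left with a (possibly empty) product of
idempotents of `V` of rank `dim U`. -/
def Reach (g h : U →ₗ[K] V) : Prop :=
  ∃ L : List (Module.End K V),
    (∀ e ∈ L, e ∘ₗ e = e ∧ Module.finrank K (LinearMap.range e) = Module.finrank K U) ∧
      h = L.prod ∘ₗ g

lemma Reach.refl (g : U →ₗ[K] V) : Reach g g :=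
  ⟨[], by simp, by ext; simp⟩

lemma Reach.trans {g h k : U →ₗ[K] V} (h₁ : Reach g h) (h₂ : Reach h k) : Reach g k := by
  obtain ⟨L, hL, rfl⟩ := h₁
  obtain ⟨M, hM, rfl⟩ := h₂
  refine ⟨M ++ L, ?_, by ext; simp⟩
  intro e he
  rcases List.mem_append.1 he with he | he
  · exact hM e he
  · exact hL e he

lemma exists_idempotent {p q : Submodule K V} (h : IsCompl p q) :
    ∃ P : Module.End K V, P ∘ₗ P = P ∧ LinearMap.range P = p ∧ LinearMap.ker P = q :=
  ⟨p.projection q h, Submodule.isIdempotentElem_projection h, Submodule.range_projection h,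
    Submodule.ker_projection h⟩

lemma injective_add_smulRight {g : U →ₗ[K] V} (hg : Function.Injective g) (φ : U →ₗ[K] K)
    {d : V} (hd : d ∉ LinearMap.range g) : Function.Injective (g + φ.smulRight d) := by
  rw [injective_iff_map_eq_zero]
  intro z hz
  simp only [LinearMap.add_apply, LinearMap.smulRight_apply] at hz
  by_cases hφ : φ z = 0
  · rw [hφ, zero_smul, add_zero] at hz
    exact (map_eq_zero_iff g hg).1 hz
  · refine absurd ⟨-(φ z)⁻¹ • z, ?_⟩ hd
    rw [map_smul, eq_neg_of_add_eq_zero_left hz, smul_neg, neg_smul, neg_neg, smul_smul,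
      inv_mul_cancel₀ hφ, one_smul]

lemma Reach.of_notMem {g : U →ₗ[K] V} (hg : Function.Injective g) (φ : U →ₗ[K] K)
    {d : V} (hd : d ∉ LinearMap.range g) : Reach g (g + φ.smulRight d) := by
  have hg' := injective_add_smulRight hg φ hd
  set g' := g + φ.smulRight d with hdef
  have hd' : d ∉ LinearMap.range g' := by
    rintro ⟨z, hz⟩
    refine hd ?_
    have hz' : g z = (1 - φ z) • d := by
      rw [sub_smul, one_smul, eq_sub_iff_add_eq]
      simpa [hdef] using hz
    by_cases h1 : 1 - φ z = 0
    · -- here `g z = 0`, hence `z = 0`, contradicting `φ z = 1`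
      have : z = 0 := (map_eq_zero_iff g hg).1 (by rw [hz', h1, zero_smul])
      simp [this] at h1
    · exact ⟨(1 - φ z)⁻¹ • z, by rw [map_smul, hz', smul_smul, inv_mul_cancel₀ h1, one_smul]⟩
  have hdisj : Disjoint (LinearMap.range g') (Submodule.span K {d}) := by
    rw [Submodule.disjoint_span_singleton]
    exact fun h => absurd h hd'
  obtain ⟨C, hC, hcompl⟩ := hdisj.symm.exists_isCompl
  obtain ⟨P, hPP, hPr, hPk⟩ := exists_idempotent hcompl.symm
  have hdC : d ∈ C := hC (Submodule.mem_span_singleton_self d)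
  refine ⟨[P], ?_, ?_⟩
  · simp only [List.mem_singleton, forall_eq]
    refine ⟨hPP, ?_⟩
    rw [hPr]
    exact LinearMap.finrank_range_of_inj hg'
  · ext z
    have h1 : P (g' z) = g' z := by
      obtain ⟨y, hy⟩ : g' z ∈ LinearMap.range P := hPr ▸ ⟨z, rfl⟩
      rw [← hy]
      exact LinearMap.congr_fun hPP y
    have h2 : P d = 0 := by rwa [← LinearMap.mem_ker, hPk]
    have h3 : g z = g' z - φ z • d := by simp [hdef]
    simp [h3, h1, h2]

lemma Reach.of_injective {g : U →ₗ[K] V}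
    (hdim : LinearMap.range g ≠ ⊤) (hg : Function.Injective g) (φ : U →ₗ[K] K)
    {d : V} (hg' : Function.Injective (g + φ.smulRight d)) : Reach g (g + φ.smulRight d) := by
  by_cases hd : d ∈ LinearMap.range g
  swap
  · exact Reach.of_notMem hg φ hd
  obtain ⟨x, hx⟩ : ∃ x, x ∉ LinearMap.range g := by
    by_contra! h
    exact hdim (eq_top_iff.2 fun x _ => h x)
  refine (Reach.of_notMem hg φ hx).trans ?_
  have hsplit : g + φ.smulRight d = (g + φ.smulRight x) + φ.smulRight (d - x) := by
    ext z; simp [smul_sub]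
  rw [hsplit]
  refine Reach.of_notMem (injective_add_smulRight hg φ hx) φ ?_
  rintro ⟨z, hz⟩
  obtain ⟨t, rfl⟩ := hd
  simp only [LinearMap.add_apply, LinearMap.smulRight_apply] at hz
  have hz' : (φ z + 1) • x = g (t - z) := by
    rw [map_sub, add_smul, one_smul]
    rw [eq_sub_iff_add_eq, ← eq_sub_iff_add_eq.1 hz]
    abel
  by_cases h1 : φ z + 1 = 0
  · -- here `g z = d` and `φ z = -1`, so `g + φ ⊗ d` kills `z`
    have hzt : t = z := by
      rw [h1, zero_smul] at hz'
      exact sub_eq_zero.1 ((map_eq_zero_iff g hg).1 hz'.symm)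
    have : z = 0 := (map_eq_zero_iff _ hg').1 (by
      simp [hzt, eq_neg_of_add_eq_zero_left h1])
    simp [this] at h1
  · exact hx ⟨(φ z + 1)⁻¹ • (t - z), by
      rw [map_smul, ← hz', smul_smul, inv_mul_cancel₀ h1, one_smul]⟩

/-- A functional on `U / A` can be made nonzero at two given nonzero vectors: if `φ₁`, `φ₂` are
nonzero at one vector each, one of `φ₁`, `φ₂`, `φ₁ + φ₂` is nonzero at both. -/
lemma exists_functional (A : Submodule K U) {u v : U} (hu : u ∉ A) (hv : v ∉ A) :
    ∃ φ : U →ₗ[K] K, A ≤ LinearMap.ker φ ∧ φ u = 1 ∧ φ v ≠ 0 := by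
  suffices h : ∃ φ : U →ₗ[K] K, A ≤ LinearMap.ker φ ∧ φ u ≠ 0 ∧ φ v ≠ 0 by
    obtain ⟨φ, hA, h1, h2⟩ := h
    refine ⟨(φ u)⁻¹ • φ, fun a ha => ?_, by simp [h1], by simp [h1, h2]⟩
    have : φ a = 0 := hA ha
    simp [this]
  obtain ⟨φ, hφ, hφA⟩ := A.exists_le_ker_of_notMem hu
  obtain ⟨ψ, hψ, hψA⟩ := A.exists_le_ker_of_notMem hv
  by_cases h1 : φ v = 0
  · by_cases h2 : ψ u = 0
    · refine ⟨φ + ψ, fun a ha => ?_, by simpa [h2] using hφ, by simpa [h1] using hψ⟩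
      have e1 : φ a = 0 := hφA ha
      have e2 : ψ a = 0 := hψA ha
      simp [e1, e2]
    · exact ⟨ψ, hψA, h2, hψ⟩
  · exact ⟨φ, hφA, hφ, h1⟩

theorem Reach.all [FiniteDimensional K U] [FiniteDimensional K V]
    (hdim : Module.finrank K U < Module.finrank K V) {g h : U →ₗ[K] V}
    (hg : Function.Injective g) (hh : Function.Injective h) : Reach g h := by
  induction hn : Module.finrank K U - Module.finrank K (LinearMap.ker (g - h))
    using Nat.strong_induction_on generalizing g with
  | _ n ih =>
  by_cases hgh : g = h
  · exact hgh ▸ Reach.refl g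
  set A := LinearMap.ker (g - h) with hA
  have memA : ∀ z, z ∈ A ↔ g z = h z := fun z => by simp [hA, sub_eq_zero]
  obtain ⟨u, hu⟩ : ∃ u, u ∉ A := by
    by_contra! H
    exact hgh (LinearMap.ext fun z => (memA z).1 (H z))
  -- `v` is the preimage of `h u` under `g`, if there is one
  obtain ⟨v, hv, hgv⟩ : ∃ v, v ∉ A ∧ ∀ t, g t = h u → t = v := by
    by_cases hr : ∃ t, g t = h u
    · obtain ⟨t, ht⟩ := hr
      refine ⟨t, fun htA => hu ?_, fun s hs => hg (hs.trans ht.symm)⟩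
      have : t = u := hh (((memA t).1 htA).symm.trans ht)
      exact this ▸ htA
    · exact ⟨u, hu, fun t ht => absurd ⟨t, ht⟩ hr⟩
  obtain ⟨φ, hφA, hφu, hφv⟩ := exists_functional A hu hv
  have hg' : Function.Injective (g + φ.smulRight (h u - g u)) := by
    rw [injective_iff_map_eq_zero]
    intro z hz
    simp only [LinearMap.add_apply, LinearMap.smulRight_apply] at hz
    by_cases h0 : φ z = 0
    · rw [h0, zero_smul, add_zero] at hz
      exact (map_eq_zero_iff g hg).1 hz
    · -- solving for `h u` gives `v = u - (φ z)⁻¹ • z`, whence `φ v = 0`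
      have key : g (u - (φ z)⁻¹ • z) = h u := by
        rw [map_sub, map_smul, eq_neg_of_add_eq_zero_left hz, smul_neg, smul_smul,
          inv_mul_cancel₀ h0, one_smul]
        abel
      refine absurd ?_ hφv
      rw [← hgv _ key]
      simp [hφu, h0]
  have hr : LinearMap.range g ≠ ⊤ := fun htop => by
    have := LinearMap.finrank_range_of_inj hg
    rw [htop, finrank_top] at this
    omega
  refine (Reach.of_injective hr hg φ hg').trans (ih _ ?_ hg' rfl)
  have hlt : A < LinearMap.ker (g + φ.smulRight (h u - g u) - h) := by
    refine lt_of_le_of_ne (fun a ha => ?_) fun heq => hu ?_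
    · have e1 : φ a = 0 := hφA ha
      simp [e1, (memA a).1 ha]
    · rw [heq]
      simp [hφu]
  have h1 := Submodule.finrank_lt_finrank_of_lt hlt
  have h2 := Submodule.finrank_le (LinearMap.ker (g + φ.smulRight (h u - g u) - h))
  omega

end Reach

/-- Fountain–Lewin / Erdős: every singular endomorphism of a finite-dimensional
vector space is a product of idempotents of the same rank. -/
theorem singular_endomorphism_eq_prod_of_idempotents_of_same_rank
    (K V : Type*) [Field K] [AddCommGroup V] [Module K V] [FiniteDimensional K V]
    (f : Module.End K V) (hf : ¬ Function.Bijective f) :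
    ∃ (n : ℕ), 0 < n ∧ ∃ e : Fin n → Module.End K V,
      (∀ i, e i ∘ₗ e i = e i) ∧
      (∀ i, Module.finrank K (LinearMap.range (e i)) =
          Module.finrank K (LinearMap.range f)) ∧
      f = (List.ofFn e).prod := by
  obtain ⟨U, hU⟩ := (LinearMap.ker f).exists_isCompl
  obtain ⟨P, hPP, hPr, hPk⟩ := exists_idempotent hU.symm
  have hker : LinearMap.ker f ≠ ⊥ := fun h => by
    have hinj := LinearMap.ker_eq_bot.1 h
    exact hf ⟨hinj, LinearMap.injective_iff_surjective.1 hinj⟩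
  have hsum := Submodule.finrank_add_eq_of_isCompl hU
  have hrank := f.finrank_range_add_finrank_ker
  have hpos : 0 < Module.finrank K (LinearMap.ker f) :=
    Nat.pos_of_ne_zero fun h => hker (Submodule.finrank_eq_zero.1 h)
  have hinj : Function.Injective (f ∘ₗ U.subtype) := by
    rw [injective_iff_map_eq_zero]
    intro z hz
    have hz0 : (z : V) ∈ LinearMap.ker f ⊓ U := ⟨hz, z.2⟩
    rw [hU.inf_eq_bot] at hz0
    exact Subtype.ext ((Submodule.mem_bot K).1 hz0)
  obtain ⟨L, hL, hprod⟩ := Reach.all (by omega) U.injective_subtype hinj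
  have hall : ∀ e ∈ L ++ [P], e ∘ₗ e = e ∧
      Module.finrank K (LinearMap.range e) = Module.finrank K (LinearMap.range f) := by
    intro e he
    rcases List.mem_append.1 he with he | he
    · exact ⟨(hL e he).1, by have := (hL e he).2; omega⟩
    · rw [List.mem_singleton.1 he]
      refine ⟨hPP, ?_⟩
      rw [hPr]
      omega
  refine ⟨(L ++ [P]).length, by simp, (L ++ [P]).get,
    fun i => (hall _ (List.get_mem _ i)).1, fun i => (hall _ (List.get_mem _ i)).2, ?_⟩
  rw [List.ofFn_get, List.prod_append, List.prod_singleton]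
  ext z
  have hPU : P z ∈ U := hPr ▸ ⟨z, rfl⟩
  have h1 : f (P z) = L.prod (P z) :=
    LinearMap.congr_fun hprod ⟨_, hPU⟩
  have h2 : z - P z ∈ LinearMap.ker f := by
    rw [← hPk, LinearMap.mem_ker, map_sub, sub_eq_zero]
    exact (LinearMap.congr_fun hPP z).symm
  rw [LinearMap.mem_ker, map_sub, sub_eq_zero] at h2
  rw [h2, h1]
  rfl
end

section
/- Let M be a matroid and let I and J be finite independent sets of M with the same cardinality l. Then there exist a natural number n and a finite sequence C₀, C₁, …, Cₙ of independent sets of M, each of cardinality l, such that C₀ = I, Cₙ = J, and |Cᵢ \ Cᵢ₊₁| ≤ 1 for every i < n. -/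
/-!
The proof is by induction on `|I \ J|`. If `I \ J` is empty, then `I = J` since the two sets are
finite of equal cardinality, and the one-term chain works. Otherwise remove some `x ∈ I \ J` from
`I`; the result is independent and smaller than `J`, so it can be augmented by some `e ∈ J`. The
set `(I \ {x}) ∪ {e}` is independent, has the same cardinality as `I`, is one exchange away
from `I`, and has fewer elements outside `J`.
-/

/-- Any two finite independent sets of the same cardinality in a matroid are connected
by a chain of independent sets of that cardinality, each differing from the next in at
most one element. -/
theorem matroid_indep_sets_connected_by_single_exchanges
    {α : Type*} (M : Matroid α) (I J : Set α) (l : ℕ)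
    (hIfin : I.Finite) (hJfin : J.Finite)
    (hI : M.Indep I) (hJ : M.Indep J)
    (hIcard : I.ncard = l) (hJcard : J.ncard = l) :
    ∃ (n : ℕ) (C : Fin (n + 1) → Set α),
      C 0 = I ∧ C (Fin.last n) = J ∧
      (∀ i, M.Indep (C i) ∧ (C i).ncard = l) ∧
      (∀ i : Fin n, (C i.castSucc \ C i.succ).ncard ≤ 1) := by
  induction hk : (I \ J).ncard using Nat.strong_induction_on generalizing I with
  | _ k ih =>
    by_cases hsub : I ⊆ J
    · obtain rfl := Set.eq_of_subset_of_ncard_le hsub (by omega) hJfin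
      exact ⟨0, fun _ => I, rfl, rfl, fun _ => ⟨hI, hIcard⟩, fun i => i.elim0⟩
    · obtain ⟨x, hxI, hxJ⟩ := Set.not_subset.mp hsub
      have hfin : (I \ {x}).Finite := hIfin.subset Set.sdiff_subset
      have hcard : (I \ {x}).ncard + 1 = I.ncard :=
        Set.ncard_sdiff_singleton_add_one hxI hIfin
      obtain ⟨e, ⟨heJ, heI⟩, hind⟩ :=
        (hI.subset (Set.sdiff_subset (t := {x}))).augment hJ (by
          rw [← hfin.cast_ncard_eq, ← hJfin.cast_ncard_eq]
          exact_mod_cast (by omega))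
      have hlt : (insert e (I \ {x}) \ J).ncard < k := by
        rw [← hk]
        refine Set.ncard_lt_ncard ?_ (hIfin.subset Set.sdiff_subset)
        refine (Set.ssubset_iff_of_subset ?_).mpr ⟨x, ⟨hxI, hxJ⟩, ?_⟩
        · rintro y ⟨rfl | hy, hyJ⟩
          · exact absurd heJ hyJ
          · exact ⟨hy.1, hyJ⟩
        · rintro ⟨rfl | hx, -⟩
          · exact hxJ heJ
          · exact hx.2 rfl
      have hcard' : (insert e (I \ {x})).ncard = l := by
        rw [Set.ncard_insert_of_notMem heI hfin]
        omega
      obtain ⟨n, C, h0, hlast, hC, hstep⟩ :=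
        ih _ hlt (insert e (I \ {x})) (hfin.insert e) hind hcard' rfl
      refine ⟨n + 1, Fin.cons I C, rfl, ?_, ?_, ?_⟩
      · rw [← Fin.succ_last, Fin.cons_succ, hlast]
      · intro i
        cases i using Fin.cases with
        | zero => exact ⟨hI, hIcard⟩
        | succ i => simpa using hC i
      · intro i
        cases i using Fin.cases with
        | zero =>
          have hdiff : I \ insert e (I \ {x}) ⊆ {x} := by
            rintro y ⟨hy, hny⟩
            by_contra hyx
            exact hny (Or.inr ⟨hy, hyx⟩)
          rw [Fin.castSucc_zero, Fin.cons_zero, Fin.cons_succ, h0]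
          simpa using Set.ncard_le_ncard hdiff (Set.finite_singleton x)
        | succ i =>
          rw [← Fin.succ_castSucc, Fin.cons_succ, Fin.cons_succ]
          exact hstep i
end

section
/- Let V be a vector space over a field K and let s and t be finite linearly independent subsets of V with the same cardinality l. Then there exist a natural number n and a finite sequence C₀, C₁, …, Cₙ of linearly independent subsets of V, each of cardinality l, such that C₀ = s, Cₙ = t, and |Cᵢ \ Cᵢ₊₁| ≤ 1 for every i < n. -/
/-!
The chain is built by induction on `|s \ t|`. If `s ≠ t`, remove some `x ∈ s \ t` from `s`. The
remaining set has fewer than `|t|` elements, so its span cannot contain `t`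
(`exists_mem_notMem_span`), and adding back a vector `y ∈ t` outside that span gives an
independent set of the same cardinality, one exchange away from `s` and with one element fewer
outside `t`.
-/

/-- A finite set with fewer elements than a linearly independent set `t` cannot span `t`. -/
lemma exists_mem_notMem_span {K V : Type*} [Field K] [AddCommGroup V] [Module K V]
    {u t : Set V} (hu : u.Finite)
    (ht : LinearIndependent K (fun x : t => (x : V))) (hlt : u.ncard < t.ncard) :
    ∃ y ∈ t, y ∉ Submodule.span K u := by
  by_contra! hcon
  have := hu.fintype
  have hle := linearIndependent_le_span' _ ht u (by
    rintro _ ⟨x, rfl⟩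
    exact hcon x x.2)
  rw [Set.ncard_eq_toFinset_card', Set.toFinset_card] at hlt
  have := Cardinal.toNat_le_toNat hle (Cardinal.natCast_lt_aleph0)
  rw [Cardinal.toNat_natCast] at this
  change t.ncard ≤ _ at this
  omega

/-- Any two finite linearly independent subsets of a vector space with the same
cardinality are connected by a chain of linearly independent sets of that cardinality,
each differing from the next in at most one element. -/
theorem linearIndependent_sets_connected_by_single_exchanges
    (K V : Type*) [Field K] [AddCommGroup V] [Module K V]
    (s t : Set V) (l : ℕ)
    (hsfin : s.Finite) (htfin : t.Finite)
    (hs : LinearIndependent K (fun x : s => (x : V)))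
    (ht : LinearIndependent K (fun x : t => (x : V)))
    (hscard : s.ncard = l) (htcard : t.ncard = l) :
    ∃ (n : ℕ) (C : Fin (n + 1) → Set V),
      C 0 = s ∧ C (Fin.last n) = t ∧
      (∀ i, LinearIndependent K (fun x : (C i) => (x : V)) ∧ (C i).ncard = l) ∧
      (∀ i : Fin n, (C i.castSucc \ C i.succ).ncard ≤ 1) := by
  induction hk : (s \ t).ncard generalizing s with
  | zero =>
    rw [Set.ncard_eq_zero hsfin.sdiff, Set.sdiff_eq_empty] at hk
    have hst : s = t := Set.eq_of_subset_of_ncard_le hk (by omega) htfin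
    exact ⟨0, fun _ => s, rfl, hst, fun _ => ⟨hs, hscard⟩, fun i => i.elim0⟩
  | succ k ih =>
    obtain ⟨x, hxs, hxt⟩ : (s \ t).Nonempty := by
      rw [← Set.ncard_pos hsfin.sdiff]
      omega
    have hufin : (s \ {x}).Finite := hsfin.sdiff
    have hucard : (s \ {x}).ncard + 1 = s.ncard := Set.ncard_sdiff_singleton_add_one hxs hsfin
    obtain ⟨y, hyt, hyu⟩ := exists_mem_notMem_span hufin ht (by omega)
    have hyu' : y ∉ s \ {x} := fun h => hyu (Submodule.subset_span h)
    have huli : LinearIndepOn K id (s \ {x}) := LinearIndepOn.mono hs Set.sdiff_subset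
    have hdiff : insert y (s \ {x}) \ t = (s \ t) \ {x} := by
      rw [Set.insert_sdiff_of_mem _ hyt, Set.sdiff_sdiff_comm]
    obtain ⟨n, C, h0, hlast, hC, hstep⟩ := ih (insert y (s \ {x})) (hufin.insert y)
      (huli.id_insert hyu) (by rw [Set.ncard_insert_of_notMem hyu' hufin]; omega) (by
        have := Set.ncard_sdiff_singleton_add_one (show x ∈ s \ t from ⟨hxs, hxt⟩) hsfin.sdiff
        rw [hdiff]
        omega)
    refine ⟨n + 1, Fin.cons s C, rfl, ?_, ?_, ?_⟩
    · rw [← Fin.succ_last, Fin.cons_succ, hlast]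
    · exact Fin.cases ⟨hs, hscard⟩ hC
    · refine Fin.cases ?_ fun i => ?_
      · rw [Fin.castSucc_zero, Fin.cons_zero, Fin.cons_succ, h0]
        have hsub : s \ insert y (s \ {x}) ⊆ {x} := by
          rintro z ⟨hzs, hz⟩
          by_contra hzx
          exact hz (Or.inr ⟨hzs, hzx⟩)
        exact (Set.ncard_le_ncard hsub).trans (Set.ncard_singleton x).le
      · rw [← Fin.succ_castSucc, Fin.cons_succ, Fin.cons_succ]
        exact hstep i
end

section
/- Let V be a finite-dimensional vector space over a field K and let s and t be finite linearly independent subsets of V with |s| = |t| = k, where k is strictly less than the dimension of V. Then there exist idempotent linear endomorphisms e₁, …, eₙ of V, each of rank k, such that the composite g = eₙ ∘ ⋯ ∘ e₁ satisfies g '' s = t. -/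
/-!
Index `s` and `t` by the same finite type, as independent families `u` and `v`. If `w` lies outside
the span of `u`, then replacing one entry `u j` by `w` is achieved by a single idempotent of rank
`k`: since `u j - w` is not in the span of the new family, that span has a complement containing
`u j - w`, and projecting along it fixes the other entries and sends `u j` to `w`
(`exchange_step`).

Such exchanges turn `u` into `v` one index at a time (`exists_reachable_eqOn`). Suppose `u` agrees
with `v` on `A` and `i ∉ A`. If `v i` is outside the span of `u`, exchange `u i` for `v i`.
Otherwise write `v i = ∑ l, c l • u l`; independence of `v` gives some `j ∉ A` with `c j ≠ 0`.
As `k < dim V` there is a `w` outside the span of `u`, and after exchanging `u j` for `w` the vector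
`v i` is outside the span, so the first case applies. Entries with index in `A` never move.
-/

namespace IdempotentExchange

open Function Submodule

variable {K V ι : Type*} [Field K] [AddCommGroup V] [Module K V]

/-- Some idempotent endomorphism of rank `k` maps the family `u` entrywise to the family `v`. -/
def Step (K : Type*) {V ι : Type*} [Field K] [AddCommGroup V] [Module K V] (k : ℕ)
    (u v : ι → V) : Prop :=
  ∃ e : Module.End K V, e ∘ₗ e = e ∧ Module.finrank K (LinearMap.range e) = k ∧
    ∀ i, e (u i) = v i

/-- The projection onto the span of `v` along a complement containing all `u i - v i`. -/
theorem step_of_disjoint [Fintype ι] {u v : ι → V} (hv : LinearIndependent K v)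
    {L : Submodule K V} (hL : Disjoint L (span K (Set.range v))) (huv : ∀ i, u i - v i ∈ L) :
    Step K (Fintype.card ι) u v := by
  obtain ⟨C, hLC, hC⟩ := hL.exists_isCompl
  refine ⟨(span K (Set.range v)).projection C hC.symm, isIdempotentElem_projection hC.symm, ?_,
    fun i => ?_⟩
  · rw [range_projection, finrank_span_eq_card hv]
  · have h₁ := (projection_apply_eq_zero_iff hC.symm).2 (hLC (huv i))
    have h₂ := projection_apply_of_mem_left hC.symm (subset_span (Set.mem_range_self (f := v) i))
    rw [map_sub, h₂] at h₁
    exact sub_eq_zero.1 h₁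

theorem notMem_span_update [DecidableEq ι] {u : ι → V} (hu : LinearIndependent K u) {w : V}
    (hw : w ∉ span K (Set.range u)) (j : ι) : u j ∉ span K (Set.range (update u j w)) := by
  intro h
  apply hw
  have h₁ : u j ∈ span K (insert w (u '' {j}ᶜ)) := by
    refine span_mono ?_ h
    rintro _ ⟨l, rfl⟩
    rcases eq_or_ne l j with rfl | hl
    · simp
    · rw [update_of_ne hl]
      exact Or.inr ⟨l, hl, rfl⟩
  refine span_mono ?_ (mem_span_insert_exchange h₁ (hu.notMem_span_image (by simp)))
  rintro _ (rfl | ⟨l, -, rfl⟩) <;> exact Set.mem_range_self _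

theorem linearIndependent_update [DecidableEq ι] {u : ι → V} (hu : LinearIndependent K u) {w : V}
    (hw : w ∉ span K (Set.range u)) (j : ι) : LinearIndependent K (update u j w) := by
  rw [linearIndependent_iff_notMem_span]
  intro i hi
  rcases eq_or_ne i j with rfl | hij
  · rw [update_self] at hi
    refine hw (span_mono ?_ hi)
    rintro _ ⟨l, hl, rfl⟩
    rw [update_of_ne hl.2]
    exact Set.mem_range_self _
  · rw [update_of_ne hij] at hi
    have h₁ : u i ∈ span K (insert w (u '' {i}ᶜ)) := by
      refine span_mono ?_ hi
      rintro _ ⟨l, hl, rfl⟩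
      rcases eq_or_ne l j with rfl | hlj
      · simp
      · rw [update_of_ne hlj]
        exact Or.inr ⟨l, hl.2, rfl⟩
    refine hw (span_mono ?_ (mem_span_insert_exchange h₁ (hu.notMem_span_image (by simp))))
    rintro _ (rfl | ⟨l, -, rfl⟩) <;> exact Set.mem_range_self _

theorem exchange_step [Fintype ι] [DecidableEq ι] {u : ι → V} (hu : LinearIndependent K u) {w : V}
    (hw : w ∉ span K (Set.range u)) (j : ι) : Step K (Fintype.card ι) u (update u j w) := by
  have hmem : w ∈ span K (Set.range (update u j w)) := subset_span ⟨j, update_self ..⟩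
  refine step_of_disjoint (L := span K {u j - w}) (linearIndependent_update hu hw j) ?_
    fun i => ?_
  · refine (disjoint_span_singleton_of_notMem fun h => ?_).symm
    exact notMem_span_update hu hw j (by simpa using add_mem h hmem)
  · rcases eq_or_ne i j with rfl | hij
    · simp
    · simp [update_of_ne hij]

theorem exists_reachable_eqOn [Fintype ι] [DecidableEq ι] [FiniteDimensional K V]
    (hk : Fintype.card ι < Module.finrank K V) {u v : ι → V} (hu : LinearIndependent K u)
    (hv : LinearIndependent K v) (A : Finset ι) :
    ∃ u' : ι → V, Relation.ReflTransGen (Step K (Fintype.card ι)) u u' ∧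
      LinearIndependent K u' ∧ ∀ i ∈ A, u' i = v i := by
  induction A using Finset.induction_on with
  | empty => exact ⟨u, .refl, hu, by simp⟩
  | insert i A hi ih =>
    obtain ⟨x, hux, hx, hxA⟩ := ih
    -- It suffices to reach a family agreeing with `v` on `A` whose span misses `v i`.
    suffices h : ∃ y : ι → V, Relation.ReflTransGen (Step K (Fintype.card ι)) u y ∧
        LinearIndependent K y ∧ (∀ l ∈ A, y l = v l) ∧ v i ∉ span K (Set.range y) by
      obtain ⟨y, huy, hy, hyA, hiy⟩ := h
      refine ⟨update y i (v i), huy.tail (exchange_step hy hiy i),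
        linearIndependent_update hy hiy i, fun l hl => ?_⟩
      rcases eq_or_ne l i with rfl | hli
      · simp
      · rw [update_of_ne hli]
        exact hyA l (Finset.mem_of_mem_insert_of_ne hl hli)
    by_cases hix : v i ∈ span K (Set.range x)
    swap
    · exact ⟨x, hux, hx, hxA, hix⟩
    obtain ⟨c, hc⟩ := (mem_span_range_iff_exists_fun K).1 hix
    obtain ⟨j, hjA, hj⟩ : ∃ j ∉ A, c j ≠ 0 := by
      by_contra! hcon
      refine hv.notMem_span_image (s := (A : Set ι)) (x := i) (by simpa using hi) ?_
      rw [← hc]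
      refine sum_mem fun l _ => ?_
      by_cases hl : l ∈ A
      · rw [hxA l hl]
        exact smul_mem _ _ (subset_span ⟨l, hl, rfl⟩)
      · simp [hcon l hl]
    obtain ⟨w, hw⟩ : ∃ w, w ∉ span K (Set.range x) := by
      by_contra! hcon
      have htop : span K (Set.range x) = ⊤ := eq_top_iff.2 fun w _ => hcon w
      have := finrank_span_eq_card hx
      rw [htop, finrank_top] at this
      omega
    refine ⟨update x j w, hux.tail (exchange_step hx hw j), linearIndependent_update hx hw j,
      fun l hl => ?_, fun h => notMem_span_update hx hw j ?_⟩
    · rw [update_of_ne (by rintro rfl; exact hjA hl), hxA l hl]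
    · -- Solve `v i = ∑ l, c l • x l` for `x j`.
      rw [← hc, ← Finset.add_sum_erase _ _ (Finset.mem_univ j)] at h
      have hrest : ∑ l ∈ Finset.univ.erase j, c l • x l ∈
          span K (Set.range (update x j w)) := by
        refine sum_mem fun l hl => smul_mem _ _ (subset_span ⟨l, ?_⟩)
        exact update_of_ne (Finset.ne_of_mem_erase hl) ..
      exact (smul_mem_iff _ hj).1 ((Submodule.add_mem_iff_left _ hrest).1 h)

theorem exists_list_of_reachable {k : ℕ} {u v : ι → V}
    (h : Relation.ReflTransGen (Step K k) u v) :
    ∃ l : List (Module.End K V),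
      (∀ e ∈ l, e ∘ₗ e = e ∧ Module.finrank K (LinearMap.range e) = k) ∧
      ∀ i, l.prod (u i) = v i := by
  induction h with
  | refl => exact ⟨[], by simp, by simp⟩
  | tail _ hstep ih =>
    obtain ⟨l, hl, hlu⟩ := ih
    obtain ⟨e, he, hrank, heu⟩ := hstep
    refine ⟨e :: l, ?_, fun i => ?_⟩
    · simpa using ⟨⟨he, hrank⟩, hl⟩
    · rw [List.prod_cons, Module.End.mul_apply, hlu, heu]

end IdempotentExchange

open IdempotentExchange in
/-- Given two finite linearly independent subsets `s, t` of the same cardinality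
`k < dim V`, some composite of idempotent endomorphisms of rank `k` maps `s` onto `t`. -/
theorem exists_idempotents_mapping_independent_set_onto_independent_set
    (K V : Type*) [Field K] [AddCommGroup V] [Module K V] [FiniteDimensional K V]
    (s t : Finset V) (k : ℕ)
    (hs : LinearIndependent K (fun x : s => (x : V)))
    (ht : LinearIndependent K (fun x : t => (x : V)))
    (hscard : s.card = k) (htcard : t.card = k)
    (hk : k < Module.finrank K V) :
    ∃ (n : ℕ), 0 < n ∧ ∃ e : Fin n → Module.End K V,
      (∀ i, e i ∘ₗ e i = e i) ∧
      (∀ i, Module.finrank K (LinearMap.range (e i)) = k) ∧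
      ((List.ofFn e).prod : Module.End K V) '' (s : Set V) = (t : Set V) := by
  classical
  let f : s ≃ t := Finset.equivOfCardEq (hscard.trans htcard.symm)
  have hv : LinearIndependent K (fun x : s => (f x : V)) := ht.comp f f.injective
  have hcard : Fintype.card s = k := by rw [Fintype.card_coe, hscard]
  obtain ⟨u', hreach, -, hu'⟩ := exists_reachable_eqOn (hcard ▸ hk) hs hv Finset.univ
  obtain rfl : u' = fun x : s => (f x : V) := funext fun i => hu' i (Finset.mem_univ i)
  obtain ⟨l, hl, hlv⟩ := exists_list_of_reachable hreach
  -- A final projection fixing `t` pointwise makes the list nonempty, which matters when `k = 0`.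
  obtain ⟨p, hp, hprank, hpv⟩ := step_of_disjoint (u := fun x : s => (f x : V)) hv
    (disjoint_bot_left) (by simp)
  rw [hcard] at hl hprank
  have hall : ∀ e ∈ p :: l, e ∘ₗ e = e ∧ Module.finrank K (LinearMap.range e) = k := by
    simpa using ⟨⟨hp, hprank⟩, hl⟩
  refine ⟨(p :: l).length, by simp, (p :: l).get, fun i => (hall _ (List.get_mem _ i)).1,
    fun i => (hall _ (List.get_mem _ i)).2, ?_⟩
  have hmap : ∀ x : s, (p :: l).prod (x : V) = f x := fun x => by
    rw [List.prod_cons, Module.End.mul_apply, hlv, hpv]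
  rw [List.ofFn_get]
  ext y
  constructor
  · rintro ⟨x, hx, rfl⟩
    rw [hmap ⟨x, hx⟩]
    exact (f ⟨x, hx⟩).2
  · intro hy
    exact ⟨f.symm ⟨y, hy⟩, (f.symm ⟨y, hy⟩).2, by rw [hmap]; simp⟩
end

section
/- Let V be a finite-dimensional vector space over a field K, let s be a finite linearly independent subset of V with |s| strictly less than the dimension of V, and let x and y be distinct elements of s. Then there exist idempotent linear endomorphisms f₁, f₂, f₃ of V, each of rank |s|, such that the composite g = f₃ ∘ f₂ ∘ f₁ satisfies g x = y, g y = x, and g u = u for every u ∈ s \ {x, y}. -/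
/-!
Since `|s| < dim V` there is a vector `w` outside the span of `s`, and `t = s ∪ {w}` is still
linearly independent. For distinct `a, b ∈ t`, collapsing `a` onto `b` while fixing the rest of `t`
is realized by an idempotent of rank `|t| - 1 = |s|` (`exists_collapse`). The spare vector `w` then
serves as a temporary slot for swapping `x` and `y`: collapse `x` onto `w`, then `y` onto `x`, then
`w` onto `y`.
-/

/-- Collapsing `a` onto `b` in a linearly independent set `t`, and killing the other vectors of a
basis extending `t`, gives an idempotent with range the span of `t \ {a}`. -/
lemma exists_collapse {K V : Type*} [Field K] [AddCommGroup V] [Module K V] [DecidableEq V]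
    (t : Finset V) (ht : LinearIndepOn K id (t : Set V)) {a b : V} (ha : a ∈ t) (hb : b ∈ t)
    (hab : a ≠ b) :
    ∃ f : Module.End K V, f ∘ₗ f = f ∧ Module.finrank K (LinearMap.range f) = t.card - 1 ∧
      f a = b ∧ ∀ u ∈ t, u ≠ a → f u = u := by
  let B := Module.Basis.extend ht
  let c : V → V := fun v => if v = a then b else if v ∈ t then v else 0
  let f : Module.End K V := B.constr K (fun i => c i)
  have hfB (i) : f (B i) = c i := B.constr_basis K _ i
  have hft (u : V) (hu : u ∈ t) : f u = c u := by
    have h := hfB ⟨u, Module.Basis.subset_extend ht hu⟩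
    rwa [Module.Basis.extend_apply_self] at h
  have hfa : f a = b := by rw [hft a ha]; simp [c]
  have hfix (u : V) (hu : u ∈ t) (hua : u ≠ a) : f u = u := by
    rw [hft u hu]; simp [c, hu, hua]
  refine ⟨f, B.ext fun i => ?_, ?_, hfa, hfix⟩
  · rw [LinearMap.comp_apply, hfB]
    by_cases hia : (i : V) = a
    · simpa [c, hia] using hfix b hb hab.symm
    · by_cases hit : (i : V) ∈ t
      · simpa [c, hia, hit] using hfix i hit hia
      · simp [c, hia, hit]
  · have hrange : LinearMap.range f = Submodule.span K ((t.erase a : Finset V) : Set V) := by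
      apply le_antisymm
      · rw [Module.Basis.constr_range, Submodule.span_le]
        rintro _ ⟨i, rfl⟩
        by_cases hia : (i : V) = a
        · simpa [c, hia] using Submodule.subset_span (by simp [hb, hab.symm])
        · by_cases hit : (i : V) ∈ t
          · simpa [c, hia, hit] using Submodule.subset_span (by simp [hia, hit])
          · simp [c, hia, hit]
      · rw [Submodule.span_le]
        intro u hu
        obtain ⟨hua, hut⟩ := Finset.mem_erase.mp hu
        exact ⟨u, hfix u hut hua⟩
    rw [hrange, finrank_span_finset_eq_card, Finset.card_erase_of_mem ha]
    exact ht.mono (by simp)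

/-- A transposition of two elements of a linearly independent set `s` with
`|s| < dim V` is realized on `s` by a composite of three idempotent endomorphisms
of rank `|s|`. -/
theorem transposition_realized_by_three_idempotents
    (K V : Type*) [Field K] [AddCommGroup V] [Module K V] [FiniteDimensional K V]
    (s : Finset V)
    (hs : LinearIndependent K (fun x : s => (x : V)))
    (hcard : s.card < Module.finrank K V)
    (x y : V) (hx : x ∈ s) (hy : y ∈ s) (hxy : x ≠ y) :
    ∃ f₁ f₂ f₃ : Module.End K V,
      (f₁ ∘ₗ f₁ = f₁ ∧ f₂ ∘ₗ f₂ = f₂ ∧ f₃ ∘ₗ f₃ = f₃) ∧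
      (Module.finrank K (LinearMap.range f₁) = s.card ∧
       Module.finrank K (LinearMap.range f₂) = s.card ∧
       Module.finrank K (LinearMap.range f₃) = s.card) ∧
      (f₃ ∘ₗ f₂ ∘ₗ f₁) x = y ∧ (f₃ ∘ₗ f₂ ∘ₗ f₁) y = x ∧
      ∀ u ∈ s, u ≠ x → u ≠ y → (f₃ ∘ₗ f₂ ∘ₗ f₁) u = u := by
  classical
  have hs' : LinearIndepOn K id (s : Set V) := hs
  obtain ⟨w, hw⟩ : ∃ w, w ∉ Submodule.span K (s : Set V) := by
    by_contra! h
    have htop : Submodule.span K (s : Set V) = ⊤ := (Submodule.eq_top_iff').mpr h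
    have hle := finrank_span_finset_le_card (R := K) s
    rw [Set.finrank, htop, finrank_top] at hle
    omega
  have hws : w ∉ s := fun h => hw (Submodule.subset_span h)
  have ht : LinearIndepOn K id ((insert w s : Finset V) : Set V) := by
    rw [Finset.coe_insert]
    exact hs'.id_insert hw
  have hcardt : (insert w s).card - 1 = s.card := by simp [hws]
  have hwx : w ≠ x := fun h => hws (h ▸ hx)
  have hwy : w ≠ y := fun h => hws (h ▸ hy)
  have hwt : w ∈ insert w s := Finset.mem_insert_self w s
  have hst {u : V} (hu : u ∈ s) : u ∈ insert w s := Finset.mem_insert_of_mem hu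
  obtain ⟨f₁, i₁, r₁, m₁, e₁⟩ := exists_collapse _ ht (hst hx) hwt hwx.symm
  obtain ⟨f₂, i₂, r₂, m₂, e₂⟩ := exists_collapse _ ht (hst hy) (hst hx) hxy.symm
  obtain ⟨f₃, i₃, r₃, m₃, e₃⟩ := exists_collapse _ ht hwt (hst hy) hwy
  rw [hcardt] at r₁ r₂ r₃
  refine ⟨f₁, f₂, f₃, ⟨i₁, i₂, i₃⟩, ⟨r₁, r₂, r₃⟩, ?_, ?_, fun u hu hux huy => ?_⟩
  · simp only [LinearMap.comp_apply]
    rw [m₁, e₂ w hwt hwy, m₃]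
  · simp only [LinearMap.comp_apply]
    rw [e₁ y (hst hy) hxy.symm, m₂, e₃ x (hst hx) hwx.symm]
  · have huw : u ≠ w := fun h => hws (h ▸ hu)
    simp only [LinearMap.comp_apply]
    rw [e₁ u (hst hu) hux, e₂ u (hst hu) huy, e₃ u (hst hu) huw]
end

section
/- Let V be a finite-dimensional vector space over a field K, let s be a finite linearly independent subset of V with |s| strictly less than the dimension of V, and let σ : s → s be a bijection of s onto itself. Then there exist idempotent linear endomorphisms f₁, …, fₘ of V, each of rank |s|, such that the composite g = fₘ ∘ ⋯ ∘ f₁ satisfies g u = σ u for every u ∈ s. -/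
/-!
Since `|s| < dim V`, there is a vector `x` outside the span of `s`, and `s` together with `x` is an
independent family, indexed by `Option s` with `x` at `none`. The vector `x` serves as a spare slot:
a transposition of `u` and `v` is the composite of three moves, `u ↦ x`, then `v ↦ u`, then
`x ↦ v`, each fixing the other current vectors. Each move is the restriction of an idempotent of
rank `|s|` (`exists_idempotent_move`). Transpositions generate all permutations, and the identity
is itself realized by one idempotent, so the list of factors is never empty.
-/

/-- If `p` and `q` are two sections of `f : κ → ι`, then on an independent family `c` the
assignment `c (p k) ↦ c (q k)` is induced by an idempotent of rank `|ι|`: the map sending each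
`c a` to `c (q (f a))`, extended to `V` with range in the span of `c ∘ q`. -/
lemma exists_idempotent_move {K V ι κ : Type*} [Field K] [AddCommGroup V] [Module K V]
    [Fintype ι] {c : κ → V} (hc : LinearIndependent K c) (p q : ι → κ) (f : κ → ι)
    (hp : ∀ k, f (p k) = k) (hq : ∀ k, f (q k) = k) :
    ∃ e : Module.End K V, e ∘ₗ e = e ∧
      Module.finrank K (LinearMap.range e) = Fintype.card ι ∧ ∀ k, e (c (p k)) = c (q k) := by
  obtain ⟨φ, hφ⟩ : ∃ φ : V →ₗ[K] (ι →₀ K), ∀ a, φ (c a) = Finsupp.single (f a) 1 := by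
    obtain ⟨φ, hφ⟩ := LinearMap.exists_extend
      (Finsupp.linearCombination K (fun a => (Finsupp.single (f a) 1 : ι →₀ K)) ∘ₗ hc.repr)
    refine ⟨φ, fun a => ?_⟩
    have h := LinearMap.congr_fun hφ ⟨c a, Submodule.subset_span ⟨a, rfl⟩⟩
    simpa [hc.repr_eq_single a ⟨c a, Submodule.subset_span ⟨a, rfl⟩⟩ rfl] using h
  let ψ : (ι →₀ K) →ₗ[K] V := Finsupp.linearCombination K (c ∘ q)
  have hφψ : φ ∘ₗ ψ = LinearMap.id := by
    ext k : 2
    simp [ψ, hφ, hq]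
  have hinv : ∀ y, φ (ψ y) = y := LinearMap.congr_fun hφψ
  refine ⟨ψ ∘ₗ φ, ?_, ?_, fun k => ?_⟩
  · ext y
    simp [hinv]
  · rw [LinearMap.range_comp_of_range_eq_top _
        (LinearMap.range_eq_top.2 (Function.LeftInverse.surjective hinv)),
      LinearMap.finrank_range_of_inj (Function.LeftInverse.injective hinv),
      Module.finrank_finsupp_self]
  · simp [ψ, hφ, hp]

/-- The permutation `σ` of the family `v` is realized by a nonempty product of idempotents
of rank `|ι|`. -/
def IsRealized (K : Type*) {V ι : Type*} [Field K] [AddCommGroup V] [Module K V] [Fintype ι]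
    (v : ι → V) (σ : Equiv.Perm ι) : Prop :=
  ∃ l : List (Module.End K V), l ≠ [] ∧
    (∀ e ∈ l, e ∘ₗ e = e ∧ Module.finrank K (LinearMap.range e) = Fintype.card ι) ∧
    ∀ k, l.prod (v k) = v (σ k)

lemma IsRealized.mul {K V ι : Type*} [Field K] [AddCommGroup V] [Module K V] [Fintype ι]
    {v : ι → V} {σ τ : Equiv.Perm ι} (hσ : IsRealized K v σ) (hτ : IsRealized K v τ) :
    IsRealized K v (σ * τ) := by
  obtain ⟨l, hl, hle, hlv⟩ := hσ
  obtain ⟨l', -, hle', hlv'⟩ := hτ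
  refine ⟨l ++ l', by simp [hl], fun e he => ?_, fun k => ?_⟩
  · exact (List.mem_append.1 he).elim (hle e) (hle' e)
  · simp [hlv, hlv']

lemma isRealized_one {K V ι : Type*} [Field K] [AddCommGroup V] [Module K V] [Fintype ι]
    {v : ι → V} (hv : LinearIndependent K v) : IsRealized K v 1 := by
  obtain ⟨e, he, hr, hev⟩ := exists_idempotent_move hv id id id (fun _ => rfl) (fun _ => rfl)
  exact ⟨[e], by simp, by simp [he, hr], by simpa using hev⟩

lemma isRealized_swap {K V ι : Type*} [Field K] [AddCommGroup V] [Module K V] [Fintype ι]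
    [DecidableEq ι] {c : Option ι → V} (hc : LinearIndependent K c) {i j : ι} (hij : i ≠ j) :
    IsRealized K (fun k => c (some k)) (Equiv.swap i j) := by
  -- The positions of the vectors after the first and the second move.
  let p₁ : ι → Option ι := Function.update some i none
  let p₂ : ι → Option ι := Function.update p₁ j (some i)
  obtain ⟨e₁, he₁, hr₁, h₁⟩ := exists_idempotent_move hc some p₁ (fun o => o.elim i id)
    (fun k => rfl) (fun k => by by_cases hk : k = i <;> simp [p₁, Function.update_apply, hk])
  obtain ⟨e₂, he₂, hr₂, h₂⟩ := exists_idempotent_move hc p₁ p₂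
    (fun o => o.elim i (Function.update id i j))
    (fun k => by by_cases hk : k = i <;> simp [p₁, Function.update_apply, hk])
    (fun k => by
      by_cases hk : k = i <;> by_cases hk' : k = j <;>
        simp_all [p₁, p₂, Function.update_apply])
  obtain ⟨e₃, he₃, hr₃, h₃⟩ := exists_idempotent_move hc p₂ (fun k => some (Equiv.swap i j k))
    (fun o => o.elim i (Equiv.swap i j))
    (fun k => by
      by_cases hk : k = i <;> by_cases hk' : k = j <;>
        simp_all [p₁, p₂, Function.update_apply, Equiv.swap_apply_def])
    (fun k => by simp)
  refine ⟨[e₃, e₂, e₁], by simp, by simp [*], fun k => ?_⟩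
  simp [h₁, h₂, h₃]

/-- Every permutation of a linearly independent set `s` with `|s| < dim V` is realized
on `s` by a composite of idempotent endomorphisms of rank `|s|`. -/
theorem permutation_of_independent_set_realized_by_idempotents
    (K V : Type*) [Field K] [AddCommGroup V] [Module K V] [FiniteDimensional K V]
    (s : Finset V)
    (hs : LinearIndependent K (fun x : s => (x : V)))
    (hcard : s.card < Module.finrank K V)
    (σ : {x // x ∈ s} ≃ {x // x ∈ s}) :
    ∃ (m : ℕ), 0 < m ∧ ∃ f : Fin m → Module.End K V,
      (∀ i, f i ∘ₗ f i = f i) ∧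
      (∀ i, Module.finrank K (LinearMap.range (f i)) = s.card) ∧
      ∀ u : {x // x ∈ s}, ((List.ofFn f).prod : Module.End K V) (u : V) = (σ u : V) := by
  classical
  obtain ⟨x, hx⟩ : ∃ x : V, x ∉ Submodule.span K (Set.range fun u : s => (u : V)) := by
    by_contra! h
    have hfin := finrank_span_eq_card hs
    rw [Submodule.eq_top_iff'.2 h, finrank_top, Fintype.card_coe] at hfin
    omega
  have hc := hs.option hx
  have key : IsRealized K (fun u : s => (u : V)) σ := by
    induction σ using Equiv.Perm.swap_induction_on with
    | one => exact isRealized_one hs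
    | swap_mul τ i j hij ih => exact IsRealized.mul (isRealized_swap hc hij) ih
  obtain ⟨l, hl, hle, hlv⟩ := key
  refine ⟨l.length, List.length_pos_iff.2 hl, l.get, fun i => (hle _ (l.get_mem i)).1,
    fun i => ?_, fun u => ?_⟩
  · simpa using (hle _ (l.get_mem i)).2
  · rw [List.ofFn_get]
    exact hlv u
end

section
/- Let V be a finite-dimensional vector space over a field K, let U be a subspace of V, and let i : U → V be a linear map whose range is contained in U and which fixes every element of its range (i.e., i(i(u)) = i(u) for all u ∈ U). Then there exists an idempotent linear endomorphism β of V such that β extends i (β u = i u for all u ∈ U) and the range of β equals the range of i; in particular rank β = rank i. -/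
/-- An idempotent partial endomorphism (a linear map `i : U → V` with range inside `U`
fixing its range pointwise) extends to an idempotent total endomorphism `β` with the
same range, and in particular the same rank. -/
theorem idempotent_partial_endomorphism_extends_to_idempotent
    (K V : Type*) [Field K] [AddCommGroup V] [Module K V] [FiniteDimensional K V]
    (U : Submodule K V) (i : U →ₗ[K] V)
    (hrange : ∀ u : U, i u ∈ U)
    (hfix : ∀ u : U, i ⟨i u, hrange u⟩ = i u) :
    ∃ β : Module.End K V,
      β ∘ₗ β = β ∧
      (∀ u : U, β (u : V) = i u) ∧
      LinearMap.range β = LinearMap.range i ∧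
      Module.finrank K (LinearMap.range β) = Module.finrank K (LinearMap.range i) := by
  -- `β = i ∘ p`, where `p : V → U` is a linear projection onto `U`.
  obtain ⟨p, hp⟩ := U.subtype.exists_leftInverse_of_injective U.ker_subtype
  have hpU : ∀ u : U, p (u : V) = u := fun u => LinearMap.congr_fun hp u
  have hr : LinearMap.range (i ∘ₗ p) = LinearMap.range i :=
    LinearMap.range_comp_of_range_eq_top i
      (LinearMap.range_eq_top.2 fun u => ⟨u, hpU u⟩)
  refine ⟨i ∘ₗ p, ?_, fun u => by simp [hpU], hr, by rw [hr]⟩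
  ext v
  have h := hpU ⟨i (p v), hrange (p v)⟩
  simp only [LinearMap.comp_apply] at h ⊢
  rw [h, hfix]
end

section
/- Let α be a finite set and let f : α → α be a map that is not bijective. Then there exist a positive integer n and idempotent maps e₁, …, eₙ : α → α, each whose image has the same cardinality as the image of f, such that f = eₙ ∘ ⋯ ∘ e₁. -/
/-!
Fix `f` of rank `r < |α|`. A map `c` with the same kernel as `f` is viewed as a placement of `r`
tokens (the kernel classes of `f`) on distinct points of `α`, and `f` is the target placement.
Since `r < |α|`, some point is always unoccupied. Sliding one token from an occupied point `x` to
an unoccupied point `y` amounts to composing on the left with an idempotent of rank `r`: fix the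
other occupied points and send everything else to `y` (`exists_idempotent_move`).

One begins with the idempotent `invFun f ∘ f`, which has the kernel of `f`. As long as `c ≠ f`,
one or two slides strictly shrink the set of points where `c` and `f` differ: if some misplaced
token has an unoccupied target, slide it there; otherwise the occupied points are exactly the range
of `f`, and parking a misplaced token at an unoccupied point vacates the target of another misplaced
token, which can then be slid into place (`exists_list_of_ker_eq`).
-/

open Classical in
/-- The placement obtained from `c` by sliding the token at `x` to `y`. -/
noncomputable def moveToken {α : Type*} (c : α → α) (x y : α) : α → α :=
  fun a => if c a = x then y else c a

theorem ncard_range_eq_of_ker {α : Type*} {c f : α → α}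
    (h : ∀ a b, c a = c b ↔ f a = f b) : (Set.range c).ncard = (Set.range f).ncard := by
  have hk : Setoid.ker c = Setoid.ker f := Setoid.ext h
  rw [← Nat.card_coe_set_eq, ← Nat.card_coe_set_eq,
    ← Nat.card_congr (Setoid.quotientKerEquivRange c),
    ← Nat.card_congr (Setoid.quotientKerEquivRange f), hk]

theorem moveToken_ker {α : Type*} {c f : α → α} (h : ∀ a b, c a = c b ↔ f a = f b)
    {x y : α} (hy : y ∉ Set.range c) (a b : α) :
    moveToken c x y a = moveToken c x y b ↔ f a = f b := by
  have hy' : ∀ a, c a ≠ y := fun a ha => hy ⟨a, ha⟩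
  rw [← h]
  unfold moveToken
  grind

theorem exists_idempotent_move_s10 {α : Type*} [Finite α] (c : α → α) {x y : α}
    (hx : x ∈ Set.range c) (hy : y ∉ Set.range c) :
    ∃ e : α → α, e ∘ e = e ∧ (Set.range e).ncard = (Set.range c).ncard ∧
      e ∘ c = moveToken c x y := by
  classical
  refine ⟨fun z => if z ∈ Set.range c ∧ z ≠ x then z else y, ?_, ?_, ?_⟩
  · funext z
    simp only [Function.comp]
    grind
  · have hr : Set.range (fun z => if z ∈ Set.range c ∧ z ≠ x then z else y)
        = insert y (Set.range c \ {x}) := by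
      ext w
      simp only [Set.mem_insert_iff, Set.mem_sdiff, Set.mem_singleton_iff]
      constructor
      · rintro ⟨z, rfl⟩
        grind
      · rintro (rfl | hw)
        · exact ⟨w, by grind⟩
        · exact ⟨w, by grind⟩
    rw [hr, Set.ncard_insert_of_notMem (fun h => hy h.1) (Set.toFinite _),
      Set.ncard_sdiff_singleton_add_one hx (Set.toFinite _)]
  · funext a
    simp only [Function.comp, moveToken, Set.mem_range_self, true_and]
    grind

theorem foldr_comp_eq {α : Type*} (l : List (α → α)) (g : α → α) :
    l.foldr (· ∘ ·) g = l.foldr (· ∘ ·) id ∘ g := by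
  induction l with
  | nil => rfl
  | cons a l ih => simp only [List.foldr_cons, ih, Function.comp_assoc]

/-- Any placement `c` of the kernel classes of `f` can be carried to `f` by idempotents of the rank
of `f`; the induction is on a bound `k` for the number of points where `c` and `f` differ. -/
theorem exists_list_of_ker_eq {α : Type*} [Finite α] (f : α → α)
    (hf : ¬ Function.Surjective f) (k : ℕ) :
    ∀ c : α → α, (∀ a b, c a = c b ↔ f a = f b) → {a | c a ≠ f a}.ncard ≤ k →
      ∃ l : List (α → α), (∀ e ∈ l, e ∘ e = e ∧ (Set.range e).ncard = (Set.range f).ncard) ∧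
        f = l.foldr (· ∘ ·) id ∘ c := by
  induction k with
  | zero =>
    intro c hc hk
    refine ⟨[], by simp, ?_⟩
    rw [Nat.le_zero, Set.ncard_eq_zero (Set.toFinite _)] at hk
    funext a
    by_contra h
    have : a ∈ {a | c a ≠ f a} := fun h' => h (by simpa using h'.symm)
    rw [hk] at this
    exact this
  | succ k ih =>
    intro c hc hk
    by_cases hall : ∀ a, c a = f a
    · exact ⟨[], by simp, by funext a; simp [hall]⟩
    push Not at hall
    obtain ⟨a₀, ha₀⟩ := hall
    by_cases hA : ∃ a, c a ≠ f a ∧ f a ∉ Set.range c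
    · obtain ⟨a, hne, hfa⟩ := hA
      obtain ⟨e, he, her, hec⟩ := exists_idempotent_move_s10 c (Set.mem_range_self a) hfa
      have hlt : {b | moveToken c (c a) (f a) b ≠ f b}.ncard < {b | c b ≠ f b}.ncard := by
        apply Set.ncard_lt_ncard _ (Set.toFinite _)
        rw [Set.ssubset_iff_of_subset]
        · exact ⟨a, hne, by simp [moveToken]⟩
        · intro b hb
          simp only [moveToken, Set.mem_ofPred_eq] at hb ⊢
          grind
      obtain ⟨l, hl, hfl⟩ := ih _ (moveToken_ker hc (x := c a) hfa) (by omega)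
      refine ⟨l ++ [e], ?_, ?_⟩
      · intro e' he'
        rcases List.mem_append.1 he' with h | h
        · exact hl _ h
        · rw [List.mem_singleton.1 h]
          exact ⟨he, her.trans (ncard_range_eq_of_ker hc)⟩
      · rw [List.foldr_append, foldr_comp_eq, Function.comp_assoc]
        simpa [hec] using hfl
    · push Not at hA
      have hsub : Set.range f ⊆ Set.range c := by
        rintro _ ⟨a, rfl⟩
        by_cases h : c a = f a
        · exact ⟨a, h⟩
        · exact hA a h
      have heq : Set.range f = Set.range c :=
        Set.eq_of_subset_of_ncard_le hsub (ncard_range_eq_of_ker hc).le (Set.toFinite _)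
      obtain ⟨h, hh⟩ : ∃ h, h ∉ Set.range c := by
        rw [← heq]
        by_contra hcon
        push Not at hcon
        exact hf hcon
      -- The token of `a₀` is parked at `h`; its former place is the target of the token of `j`.
      obtain ⟨j, hj⟩ : c a₀ ∈ Set.range f := heq ▸ Set.mem_range_self a₀
      have hh' : ∀ a, c a ≠ h := fun a ha => hh ⟨a, ha⟩
      have hja : c j ≠ c a₀ := fun hja => ha₀ (hj.symm.trans ((hc _ _).1 hja))
      obtain ⟨e, he, her, hec⟩ := exists_idempotent_move_s10 c (Set.mem_range_self a₀) hh
      have hc₁ := moveToken_ker hc (x := c a₀) hh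
      set c₁ := moveToken c (c a₀) h with hc₁def
      have hfj : f j ∉ Set.range c₁ := by
        rintro ⟨b, hb⟩
        simp only [hc₁def, moveToken] at hb
        grind
      obtain ⟨e', he', her', hec'⟩ := exists_idempotent_move_s10 c₁ (Set.mem_range_self j) hfj
      have hlt : {b | moveToken c₁ (c₁ j) (f j) b ≠ f b}.ncard < {b | c b ≠ f b}.ncard := by
        apply Set.ncard_lt_ncard _ (Set.toFinite _)
        rw [Set.ssubset_iff_of_subset]
        · exact ⟨j, by simpa [hj] using hja, by simp [moveToken]⟩
        · intro b hb
          simp only [hc₁def, moveToken, Set.mem_ofPred_eq] at hb ⊢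
          grind
      obtain ⟨l, hl, hfl⟩ := ih _ (moveToken_ker hc₁ (x := c₁ j) hfj) (by omega)
      refine ⟨l ++ [e', e], ?_, ?_⟩
      · intro d hd
        rcases List.mem_append.1 hd with h | h
        · exact hl _ h
        · simp only [List.mem_cons, List.not_mem_nil, or_false] at h
          rcases h with rfl | rfl
          · exact ⟨he', her'.trans (ncard_range_eq_of_ker hc₁)⟩
          · exact ⟨he, her.trans (ncard_range_eq_of_ker hc)⟩
      · rw [List.foldr_append, foldr_comp_eq, Function.comp_assoc]
        simpa [hec, hec', Function.comp_assoc] using hfl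

/-- Fountain–Lewin / Howie: every non-bijective map on a finite set is a composite of
idempotent maps whose images have the same cardinality as the image of the map. -/
theorem singular_map_eq_comp_of_idempotents_of_same_rank
    {α : Type*} [Fintype α] (f : α → α) (hf : ¬ Function.Bijective f) :
    ∃ (n : ℕ), 0 < n ∧ ∃ e : Fin n → (α → α),
      (∀ i, e i ∘ e i = e i) ∧
      (∀ i, (Set.range (e i)).ncard = (Set.range f).ncard) ∧
      f = (List.ofFn e).foldr (· ∘ ·) id := by
  have hs : ¬ Function.Surjective f := fun h => hf ⟨Finite.injective_iff_surjective.2 h, h⟩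
  have : Nonempty α := by
    by_contra h
    rw [not_nonempty_iff] at h
    exact hs fun a => h.elim a
  set e₀ : α → α := Function.invFun f ∘ f with he₀
  have hfe : ∀ a, f (e₀ a) = f a := fun a => Function.invFun_eq ⟨a, rfl⟩
  have hker : ∀ a b, e₀ a = e₀ b ↔ f a = f b := by
    intro a b
    constructor
    · intro h
      rw [← hfe a, h, hfe]
    · intro h
      simp [he₀, h]
  obtain ⟨l, hl, hfl⟩ := exists_list_of_ker_eq f hs _ e₀ hker le_rfl
  have hL : ∀ e ∈ l ++ [e₀], e ∘ e = e ∧ (Set.range e).ncard = (Set.range f).ncard := by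
    intro e he
    rcases List.mem_append.1 he with h | h
    · exact hl _ h
    · rw [List.mem_singleton.1 h]
      refine ⟨?_, ncard_range_eq_of_ker hker⟩
      funext a
      exact (hker _ _).2 (hfe a)
  refine ⟨(l ++ [e₀]).length, by simp, (l ++ [e₀]).get, fun i => (hL _ (List.get_mem _ _)).1,
    fun i => (hL _ (List.get_mem _ _)).2, ?_⟩
  rw [List.ofFn_get, List.foldr_append, foldr_comp_eq]
  simpa using hfl
end

section
/- Let α be a finite set, let s be a subset of α with |s| < |α|, and let x and y be distinct elements of s. Then there exist idempotent maps f₁, f₂, f₃ : α → α, each whose image has cardinality |s|, such that the composite g = f₃ ∘ f₂ ∘ f₁ satisfies g x = y, g y = x, and g u = u for every u ∈ s \ {x, y}. -/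
/-!
Pick `z ∉ s` and use it as a spare cell for the swap: first move `x` to `z`, then `y` to `x`,
then `z` to `y`. Each move is a map `collapseOnto t a`, which fixes the set `t` and sends everything
else to a point `a ∈ t`; it is idempotent with image `t`. The three sets are `s \ {x} ∪ {z}`,
`s \ {y} ∪ {z}` and `s`, all of cardinality `|s|`.
-/

open Classical in
/-- The map fixing `t` pointwise and sending every point outside `t` to `a`. -/
noncomputable def collapseOnto {α : Type*} (t : Finset α) (a : α) (u : α) : α :=
  if u ∈ t then u else a

theorem collapseOnto_of_mem {α : Type*} {t : Finset α} {a u : α} (hu : u ∈ t) :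
    collapseOnto t a u = u := if_pos hu

theorem collapseOnto_mem {α : Type*} {t : Finset α} {a : α} (ha : a ∈ t) (u : α) :
    collapseOnto t a u ∈ t := by
  unfold collapseOnto
  split_ifs with h
  · exact h
  · exact ha

theorem collapseOnto_idem {α : Type*} {t : Finset α} {a : α} (ha : a ∈ t) :
    collapseOnto t a ∘ collapseOnto t a = collapseOnto t a :=
  funext fun u => collapseOnto_of_mem (collapseOnto_mem ha u)

theorem ncard_range_collapseOnto {α : Type*} {t : Finset α} {a : α} (ha : a ∈ t) :
    (Set.range (collapseOnto t a)).ncard = t.card := by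
  have h : Set.range (collapseOnto t a) = (t : Set α) := by
    ext u
    constructor
    · rintro ⟨v, rfl⟩
      exact collapseOnto_mem ha v
    · intro hu
      exact ⟨u, collapseOnto_of_mem hu⟩
  rw [h, Set.ncard_coe_finset]

/-- A transposition of two elements of a subset `s` of a finite set `α` with
`|s| < |α|` is realized on `s` by a composite of three idempotent maps whose images
have cardinality `|s|`. -/
theorem transposition_realized_by_three_idempotent_maps
    {α : Type*} [Fintype α] (s : Finset α)
    (hcard : s.card < Fintype.card α)
    (x y : α) (hx : x ∈ s) (hy : y ∈ s) (hxy : x ≠ y) :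
    ∃ f₁ f₂ f₃ : α → α,
      (f₁ ∘ f₁ = f₁ ∧ f₂ ∘ f₂ = f₂ ∧ f₃ ∘ f₃ = f₃) ∧
      ((Set.range f₁).ncard = s.card ∧
       (Set.range f₂).ncard = s.card ∧
       (Set.range f₃).ncard = s.card) ∧
      (f₃ ∘ f₂ ∘ f₁) x = y ∧ (f₃ ∘ f₂ ∘ f₁) y = x ∧
      ∀ u ∈ s, u ≠ x → u ≠ y → (f₃ ∘ f₂ ∘ f₁) u = u := by
  classical
  obtain ⟨z, hz⟩ : ∃ z, z ∉ s := by
    by_contra! h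
    rw [Finset.eq_univ_iff_forall.mpr h, Finset.card_univ] at hcard
    exact lt_irrefl _ hcard
  have hzx : z ≠ x := fun h => hz (h ▸ hx)
  have hzy : z ≠ y := fun h => hz (h ▸ hy)
  have card_swap : ∀ w ∈ s, (insert z (s.erase w)).card = s.card := fun w hw => by
    rw [Finset.card_insert_of_notMem fun h => hz (Finset.mem_of_mem_erase h),
      Finset.card_erase_add_one hw]
  have h₁ : z ∈ insert z (s.erase x) := Finset.mem_insert_self _ _
  have h₂ : x ∈ insert z (s.erase y) := by simp [hx, hxy]
  refine ⟨collapseOnto (insert z (s.erase x)) z, collapseOnto (insert z (s.erase y)) x, collapseOnto s y,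
    ⟨collapseOnto_idem h₁, collapseOnto_idem h₂, collapseOnto_idem hy⟩,
    ⟨(ncard_range_collapseOnto h₁).trans (card_swap x hx),
      (ncard_range_collapseOnto h₂).trans (card_swap y hy), ncard_range_collapseOnto hy⟩, ?_, ?_, ?_⟩
  · simp [collapseOnto, hz, hzx.symm]
  · simp [collapseOnto, hx, hy, hxy.symm, hzy.symm]
  · intro u hu hux huy
    simp [collapseOnto, hu, hux, huy]
end
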